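/- Let D be an ADF. The set of strongly admissible interpretations of D, partially ordered by ≤_i, forms a lattice: every two strongly admissible interpretations have a supremum and an infimum within this set. Moreover this lattice has least element the trivial interpretation v_u and greatest element the grounded interpretation grd(D). -/

import Mathlib

/-! Call `a` *derivable* from `v` when `v a ≠ u` and `Γ_D (v|_P) a = v a` for some set `P` of
derivable arguments. The excluded sets in the definition of strong acceptability can be dispensed
with: `v` is strongly admissible iff every argument decided by `v` is derivable
(`stronglyAdmissible_iff`). One direction is immediate. For the other, the derivable arguments are
stratified into stages; an argument entering at stage `n + 1` is justified by its parents in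
stage `n`, so along a chain of justifications the entry stage strictly decreases and no excluded
argument is ever needed again.

Derivability is monotone in `v` by monotonicity of `Γ_D`, and this yields the lattice structure.
Every strongly admissible `v` lies below the grounded interpretation `g`, by induction on
derivations, so any two of them are compatible and their pointwise join is their supremum.
Restricting any `v` to its derivable arguments gives `core D v`, the greatest strongly admissible
interpretation below `v`; the infimum of `v` and `w` is the core of their pointwise meet.
Finally `core D g` is a fixed point of `Γ_D`, hence equal to `g`, so `g` is strongly admissible. -/

/-- Three truth values: true, false, undecided. -/
inductive TV : Type
  | t | f | u
deriving DecidableEq, Repr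

/-- The information order on truth values: u <_i t and u <_i f. -/
def TV.ile (x y : TV) : Prop := x = TV.u ∨ x = y

/-- The information order on interpretations, extended pointwise. -/
def ILE {A : Type*} (v w : A → TV) : Prop := ∀ a, TV.ile (v a) (w a)

/-- An abstract dialectical framework on a set of arguments `A`:
each argument `a` has an acceptance condition `C a : (A → Bool) → Bool`. -/
structure ADF (A : Type*) where
  C : A → (A → Bool) → Bool

/-- The trivial interpretation mapping every argument to undecided. -/
def trivialInterp (A : Type*) : A → TV := fun _ => TV.u

/-- The parents of `a` are the arguments on which its acceptance condition depends. -/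
def ADF.parents {A : Type*} [DecidableEq A] (D : ADF A) (a : A) : Set A :=
  {b | ∃ w : A → Bool, D.C a w ≠ D.C a (Function.update w b (!w b))}

/-- A two-valued assignment `w` completes a three-valued interpretation `v`. -/
def Completes {A : Type*} (w : A → Bool) (v : A → TV) : Prop :=
  ∀ b, (v b = TV.t → w b = true) ∧ (v b = TV.f → w b = false)

/-- `φ` is irrefutable under `v`: every completion of `v` makes `φ` true. -/
def Irrefutable {A : Type*} (φ : (A → Bool) → Bool) (v : A → TV) : Prop :=
  ∀ w : A → Bool, Completes w v → φ w = true

/-- `φ` is unsatisfiable under `v`: every completion of `v` makes `φ` false. -/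
def Unsat {A : Type*} (φ : (A → Bool) → Bool) (v : A → TV) : Prop :=
  ∀ w : A → Bool, Completes w v → φ w = false

open Classical in
/-- The characteristic operator Γ_D of an ADF. -/
noncomputable def Gamma {A : Type*} (D : ADF A) (v : A → TV) : A → TV := fun a =>
  if Irrefutable (D.C a) v then TV.t
  else if Unsat (D.C a) v then TV.f
  else TV.u

open Classical in
/-- `v|_P`: agrees with `v` on `P` and is undecided elsewhere. -/
noncomputable def restrictTV {A : Type*} (v : A → TV) (P : Set A) : A → TV :=
  fun b => if b ∈ P then v b else TV.u

/-- Strong acceptability/deniability of an argument with respect to interpretation `v`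
and set `S`, relative to an excluded set `E` (the first index). An argument `a` with
`v a = t` (resp. `v a = f`) is strongly acceptable (resp. strongly deniable) iff there is
`P ⊆ (parents a ∩ S) \ E` with `φ_a^{v|_P}` irrefutable (resp. unsatisfiable) and every
`p ∈ P` strongly acceptable/deniable relative to `E ∪ {p}`. -/
inductive SJrel {A : Type*} [DecidableEq A] (D : ADF A) (v : A → TV) (S : Set A) :
    Set A → A → Prop
  | acc (E : Set A) (a : A) (P : Set A)
      (ha : v a = TV.t)
      (hP : P ⊆ (D.parents a ∩ S) \ E)
      (hirr : Irrefutable (D.C a) (restrictTV v P))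
      (hrec : ∀ p ∈ P, SJrel D v S (E ∪ {p}) p) : SJrel D v S E a
  | den (E : Set A) (a : A) (P : Set A)
      (ha : v a = TV.f)
      (hP : P ⊆ (D.parents a ∩ S) \ E)
      (hunsat : Unsat (D.C a) (restrictTV v P))
      (hrec : ∀ p ∈ P, SJrel D v S (E ∪ {p}) p) : SJrel D v S E a

/-- `a` is strongly acceptable/deniable w.r.t. `v` and `S`
(i.e., relative to the excluded set `{a}`). -/
def StronglyJustified {A : Type*} [DecidableEq A] (D : ADF A) (v : A → TV)
    (S : Set A) (a : A) : Prop :=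
  SJrel D v S {a} a

/-- `S` is a least set for `a` with respect to `v`. -/
def LeastSet {A : Type*} [DecidableEq A] (D : ADF A) (v : A → TV)
    (a : A) (S : Set A) : Prop :=
  StronglyJustified D v S a ∧
  ∀ S' : Set A, S'.ncard < S.ncard → ¬ StronglyJustified D v S' a

/-- An interpretation is strongly admissible iff every argument assigned `t`/`f`
is strongly acceptable/deniable w.r.t. `v` and some set `S`. -/
def StronglyAdmissible {A : Type*} [DecidableEq A] (D : ADF A) (v : A → TV) : Prop :=
  ∀ a : A, v a ≠ TV.u → ∃ S : Set A, StronglyJustified D v S a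

/-- `g` is the grounded interpretation of `D`: the least fixed point of `Γ_D`. -/
def IsGrounded {A : Type*} (D : ADF A) (g : A → TV) : Prop :=
  Gamma D g = g ∧ ∀ w : A → TV, Gamma D w = w → ILE g w

/-- An interpretation is admissible iff `v ≤_i Γ_D(v)`. -/
def Admissible {A : Type*} (D : ADF A) (v : A → TV) : Prop :=
  ILE v (Gamma D v)

/-- An interpretation is conflict-free. -/
def ConflictFree {A : Type*} (D : ADF A) (v : A → TV) : Prop :=
  ∀ a : A, (v a = TV.t → ∃ w : A → Bool, Completes w v ∧ D.C a w = true) ∧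
           (v a = TV.f → Unsat (D.C a) v)

/-- The join of two interpretations: take `v`'s value where defined, else `w`'s. -/
def joinI {A : Type*} (v w : A → TV) : A → TV :=
  fun a => if v a = TV.u then w a else v a

section StrongAdmissibility

variable {A : Type*}

theorem TV.ile.eq_of_ne {x y : TV} (h : TV.ile x y) (hx : x ≠ TV.u) : y = x := by
  rcases h with h | h
  · exact absurd h hx
  · exact h.symm

theorem exists_completes (v : A → TV) : ∃ w : A → Bool, Completes w v := by
  refine ⟨fun a => decide (v a = TV.t), fun b => ⟨fun h => ?_, fun h => ?_⟩⟩ <;> simp [h]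

theorem Completes.anti {v v' : A → TV} (h : ILE v v') {w : A → Bool} (hw : Completes w v') :
    Completes w v := by
  intro b
  constructor
  · intro hb
    exact (hw b).1 (((h b).eq_of_ne (by simp [hb])).trans hb)
  · intro hb
    exact (hw b).2 (((h b).eq_of_ne (by simp [hb])).trans hb)

theorem gamma_eq_t {D : ADF A} {v : A → TV} {a : A} :
    Gamma D v a = TV.t ↔ Irrefutable (D.C a) v := by
  unfold Gamma
  split_ifs <;> simp_all

/-- No condition is both irrefutable and unsatisfiable, because every interpretation has a
completion; hence the order of the tests in `Gamma` is immaterial. -/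
theorem gamma_eq_f {D : ADF A} {v : A → TV} {a : A} :
    Gamma D v a = TV.f ↔ Unsat (D.C a) v := by
  unfold Gamma
  split_ifs with h1 h2
  · simp only [false_iff]
    intro h
    obtain ⟨w, hw⟩ := exists_completes v
    have := h1 w hw
    simp [h w hw] at this
  · simp [h2]
  · simp [h2]

theorem gamma_mono (D : ADF A) {v v' : A → TV} (h : ILE v v') :
    ILE (Gamma D v) (Gamma D v') := by
  intro a
  cases hx : Gamma D v a with
  | u => exact Or.inl rfl
  | t =>
    exact Or.inr (gamma_eq_t.2 fun w hw => gamma_eq_t.1 hx w (hw.anti h)).symm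
  | f =>
    exact Or.inr (gamma_eq_f.2 fun w hw => gamma_eq_f.1 hx w (hw.anti h)).symm

theorem restrictTV_ile {v v' : A → TV} {P Q : Set A} (h : ∀ p ∈ P, TV.ile (v p) (v' p))
    (hPQ : P ⊆ Q) : ILE (restrictTV v P) (restrictTV v' Q) := by
  intro b
  by_cases hb : b ∈ P
  · simpa [restrictTV, hb, hPQ hb] using h b hb
  · exact Or.inl (by simp [restrictTV, hb])

/-- `P` supports the value of `a` under `v`: this value is decided and `Γ_D (v|_P)` yields it. -/
def Supports (D : ADF A) (v : A → TV) (P : Set A) (a : A) : Prop :=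
  v a ≠ TV.u ∧ Gamma D (restrictTV v P) a = v a

theorem Supports.mono {D : ADF A} {v v' : A → TV} {P Q : Set A} {a : A}
    (h : Supports D v P a) (ha : TV.ile (v a) (v' a)) (hP : ∀ p ∈ P, TV.ile (v p) (v' p))
    (hPQ : P ⊆ Q) : Supports D v' Q a := by
  have h1 := ha.eq_of_ne h.1
  have h2 := (gamma_mono D (restrictTV_ile hP hPQ) a).eq_of_ne (by rw [h.2]; exact h.1)
  exact ⟨by rw [h1]; exact h.1, by rw [h1, h2, h.2]⟩

theorem TV.ile_refl (x : TV) : TV.ile x x := Or.inr rfl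

/-- `a` is derivable from `v`: its value is supported by a set of derivable arguments. This is
strong acceptability/deniability without the excluded sets and without the restriction of the
supporting set to parents. -/
inductive Derivable (D : ADF A) (v : A → TV) : A → Prop
  | mk (a : A) (P : Set A) (hs : Supports D v P a) (hP : ∀ p ∈ P, Derivable D v p) :
      Derivable D v a

theorem Derivable.ne_u {D : ADF A} {v : A → TV} {a : A} (h : Derivable D v a) :
    v a ≠ TV.u := by
  cases h with
  | mk _ P hs _ => exact hs.1

theorem Derivable.supports {D : ADF A} {v : A → TV} {a : A} (h : Derivable D v a) :
    Supports D v {b | Derivable D v b} a := by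
  cases h with
  | mk _ P hs hP => exact hs.mono (TV.ile_refl _) (fun _ _ => TV.ile_refl _) hP

/-- It suffices that the two interpretations are comparable on the derivable arguments. -/
theorem Derivable.mono {D : ADF A} {v v' : A → TV}
    (hle : ∀ b, Derivable D v b → TV.ile (v b) (v' b)) {a : A} (h : Derivable D v a) :
    Derivable D v' a := by
  induction h with
  | mk a P hs hP ih =>
    exact .mk a P (hs.mono (hle a (.mk a P hs hP)) (fun p hp => hle p (hP p hp)) subset_rfl) ih

/-- The arguments derivable from `v` in at most `n` rounds. -/
def stage (D : ADF A) (v : A → TV) : ℕ → Set A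
  | 0 => ∅
  | n + 1 => {a | Supports D v (stage D v n) a}

theorem stage_mono (D : ADF A) (v : A → TV) : Monotone (stage D v) := by
  apply monotone_nat_of_le_succ
  intro n
  induction n with
  | zero => exact Set.empty_subset _
  | succ n ih =>
    intro a ha
    exact Supports.mono ha (TV.ile_refl _) (fun _ _ => TV.ile_refl _) ih

theorem Derivable.exists_stage [Finite A] {D : ADF A} {v : A → TV} {a : A}
    (h : Derivable D v a) : ∃ n, a ∈ stage D v n := by
  induction h with
  | mk a P hs hP ih =>
    choose! f hf using ih
    obtain ⟨N, hN⟩ := (Set.finite_range f).bddAbove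
    refine ⟨N + 1, hs.mono (TV.ile_refl _) (fun _ _ => TV.ile_refl _) fun p hp => ?_⟩
    exact stage_mono D v (hN ⟨p, rfl⟩) (hf p hp)

theorem exists_entry_stage {D : ADF A} {v : A → TV} {a : A} {n : ℕ} (h : a ∈ stage D v n) :
    ∃ k < n, a ∈ stage D v (k + 1) ∧ a ∉ stage D v k := by
  induction n with
  | zero => exact absurd h (Set.notMem_empty a)
  | succ n ih =>
    by_cases hn : a ∈ stage D v n
    · obtain ⟨k, hk, h'⟩ := ih hn
      exact ⟨k, hk.trans n.lt_succ_self, h'⟩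
    · exact ⟨n, n.lt_succ_self, h, hn⟩

/-- An acceptance condition only depends on the values of the parents: one assignment is turned
into the other by flipping finitely many non-parents one at a time. -/
theorem ADF.C_congr [Finite A] [DecidableEq A] (D : ADF A) (a : A) {w w' : A → Bool}
    (h : ∀ b ∈ D.parents a, w b = w' b) : D.C a w = D.C a w' := by
  have := Fintype.ofFinite A
  have key : ∀ s : Finset A, (∀ b ∈ s, b ∉ D.parents a) →
      D.C a (s.piecewise w' w) = D.C a w := by
    intro s
    induction s using Finset.induction_on with
    | empty => simp
    | insert b s hb ih =>
      intro hs
      rw [Finset.piecewise_insert, ← ih fun c hc => hs c (Finset.mem_insert_of_mem hc)]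
      have hnp := hs b (Finset.mem_insert_self b s)
      simp only [ADF.parents, Set.mem_ofPred_eq, not_exists, not_not] at hnp
      by_cases hwb : w' b = s.piecewise w' w b
      · rw [hwb, Function.update_eq_self]
      · rw [Bool.eq_not_of_ne hwb, ← hnp]
  classical
  have hw : (Finset.univ.filter fun b => b ∉ D.parents a).piecewise w' w = w' := by
    funext b
    by_cases hb : b ∈ D.parents a
    · simp [Finset.piecewise, hb, h b hb]
    · simp [Finset.piecewise, hb]
  rw [← key (Finset.univ.filter fun b => b ∉ D.parents a) (by simp), hw]

/-- Every completion of `v|_{parents(a) ∩ P}` agrees on the parents of `a` with some completion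
of `v|_P`. -/
theorem exists_completes_restrict [DecidableEq A] (D : ADF A) (a : A) (v : A → TV) (P : Set A)
    {w : A → Bool} (hw : Completes w (restrictTV v (D.parents a ∩ P))) :
    ∃ w', Completes w' (restrictTV v P) ∧ ∀ b ∈ D.parents a, w b = w' b := by
  classical
  obtain ⟨w₀, hw₀⟩ := exists_completes (restrictTV v P)
  refine ⟨fun b => if b ∈ D.parents a then w b else w₀ b, fun b => ?_, fun b hb => by simp [hb]⟩
  by_cases hb : b ∈ D.parents a
  · simpa [hb, restrictTV] using hw b
  · simpa [hb] using hw₀ b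

theorem irrefutable_inter_parents [Finite A] [DecidableEq A] {D : ADF A} {a : A} {v : A → TV}
    {P : Set A} (h : Irrefutable (D.C a) (restrictTV v P)) :
    Irrefutable (D.C a) (restrictTV v (D.parents a ∩ P)) := by
  intro w hw
  obtain ⟨w', hw', heq⟩ := exists_completes_restrict D a v P hw
  rw [D.C_congr a heq, h w' hw']

theorem unsat_inter_parents [Finite A] [DecidableEq A] {D : ADF A} {a : A} {v : A → TV}
    {P : Set A} (h : Unsat (D.C a) (restrictTV v P)) :
    Unsat (D.C a) (restrictTV v (D.parents a ∩ P)) := by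
  intro w hw
  obtain ⟨w', hw', heq⟩ := exists_completes_restrict D a v P hw
  rw [D.C_congr a heq, h w' hw']

theorem SJrel.derivable [DecidableEq A] {D : ADF A} {v : A → TV} {S E : Set A} {a : A}
    (h : SJrel D v S E a) : Derivable D v a := by
  induction h with
  | acc E a P ha hP hirr hrec ih =>
    exact .mk a P ⟨by simp [ha], by rw [ha]; exact gamma_eq_t.2 hirr⟩ ih
  | den E a P ha hP hunsat hrec ih =>
    exact .mk a P ⟨by simp [ha], by rw [ha]; exact gamma_eq_f.2 hunsat⟩ ih

/-- The justification uses only arguments of stage `n`, so it is not affected by excluding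
arguments outside that stage. -/
theorem sjrel_of_mem_stage [Finite A] [DecidableEq A] (D : ADF A) (v : A → TV) (n : ℕ) :
    ∀ (a : A) (E : Set A), a ∈ stage D v (n + 1) → Disjoint E (stage D v n) →
      SJrel D v Set.univ E a := by
  induction n using Nat.strong_induction_on with
  | _ n ih =>
    intro a E ha hE
    have hP : D.parents a ∩ stage D v n ⊆ (D.parents a ∩ Set.univ) \ E := fun p hp =>
      ⟨⟨hp.1, trivial⟩, fun hpE => Set.disjoint_left.1 hE hpE hp.2⟩
    have hrec : ∀ p ∈ D.parents a ∩ stage D v n, SJrel D v Set.univ (E ∪ {p}) p := by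
      intro p hp
      obtain ⟨k, hk, hpk, hpk'⟩ := exists_entry_stage hp.2
      refine ih k hk p _ hpk (Set.disjoint_union_left.2 ⟨?_, ?_⟩)
      · exact hE.mono_right (stage_mono D v hk.le)
      · exact Set.disjoint_singleton_left.2 hpk'
    obtain ⟨hne, hg⟩ := ha
    cases hv : v a with
    | u => exact absurd hv hne
    | t => exact .acc E a _ hv hP (irrefutable_inter_parents (gamma_eq_t.1 (hg.trans hv))) hrec
    | f => exact .den E a _ hv hP (unsat_inter_parents (gamma_eq_f.1 (hg.trans hv))) hrec

theorem stronglyAdmissible_iff [Finite A] [DecidableEq A] {D : ADF A} {v : A → TV} :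
    StronglyAdmissible D v ↔ ∀ a, v a ≠ TV.u → Derivable D v a := by
  constructor
  · intro h a ha
    obtain ⟨S, hS⟩ := h a ha
    exact SJrel.derivable hS
  · intro h a ha
    obtain ⟨n, hn⟩ := (h a ha).exists_stage
    obtain ⟨k, -, hk, hnot⟩ := exists_entry_stage hn
    exact ⟨Set.univ, sjrel_of_mem_stage D v k a {a} hk (Set.disjoint_singleton_left.2 hnot)⟩

/-- The restriction of `v` to its derivable arguments. -/
noncomputable def core (D : ADF A) (v : A → TV) : A → TV :=
  restrictTV v {a | Derivable D v a}

theorem core_of_derivable {D : ADF A} {v : A → TV} {a : A} (h : Derivable D v a) :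
    core D v a = v a := by
  simp [core, restrictTV, h]

theorem core_of_not_derivable {D : ADF A} {v : A → TV} {a : A} (h : ¬ Derivable D v a) :
    core D v a = TV.u := by
  simp [core, restrictTV, h]

theorem core_ile (D : ADF A) (v : A → TV) : ILE (core D v) v := by
  intro a
  by_cases h : Derivable D v a
  · exact Or.inr (core_of_derivable h)
  · exact Or.inl (core_of_not_derivable h)

theorem core_stronglyAdmissible [Finite A] [DecidableEq A] (D : ADF A) (v : A → TV) :
    StronglyAdmissible D (core D v) := by
  refine stronglyAdmissible_iff.2 fun a ha => ?_
  have hd : Derivable D v a := by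
    by_contra h
    exact ha (core_of_not_derivable h)
  exact hd.mono fun b hb => Or.inr (core_of_derivable hb).symm

theorem ile_core [Finite A] [DecidableEq A] {D : ADF A} {t v : A → TV}
    (ht : StronglyAdmissible D t) (h : ILE t v) : ILE t (core D v) := by
  intro a
  by_cases ha : t a = TV.u
  · exact Or.inl ha
  · have hd := (stronglyAdmissible_iff.1 ht a ha).mono fun b _ => h b
    rw [core_of_derivable hd]
    exact h a

theorem gamma_core_of_fixed {D : ADF A} {g : A → TV} (hg : Gamma D g = g) :
    Gamma D (core D g) = core D g := by
  funext a
  by_cases h : Derivable D g a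
  · rw [core_of_derivable h]
    exact h.supports.2
  · rw [core_of_not_derivable h]
    by_contra hne
    have hga : g a = Gamma D (core D g) a := by
      have := (gamma_mono D (core_ile D g) a).eq_of_ne hne
      rwa [hg] at this
    exact h (.mk a _ ⟨by rw [hga]; exact hne, hga.symm⟩ fun p hp => hp)

theorem IsGrounded.stronglyAdmissible [Finite A] [DecidableEq A] {D : ADF A} {g : A → TV}
    (hg : IsGrounded D g) : StronglyAdmissible D g := by
  have hle := hg.2 _ (gamma_core_of_fixed hg.1)
  refine stronglyAdmissible_iff.2 fun a ha => ?_
  by_contra h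
  have := (hle a).eq_of_ne ha
  exact ha (this.symm.trans (core_of_not_derivable h))

theorem Derivable.eq_of_fixed {D : ADF A} {v g : A → TV} (hg : Gamma D g = g) {a : A}
    (h : Derivable D v a) : g a = v a := by
  induction h with
  | mk a P hs hP ih =>
    have hle : ILE (restrictTV v P) g := by
      intro b
      by_cases hb : b ∈ P
      · exact Or.inr (by simp [restrictTV, hb, ih b hb])
      · exact Or.inl (by simp [restrictTV, hb])
    have := (gamma_mono D hle a).eq_of_ne (by rw [hs.2]; exact hs.1)
    rwa [hg, hs.2] at this

theorem StronglyAdmissible.ile_grounded [Finite A] [DecidableEq A] {D : ADF A} {v g : A → TV}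
    (hv : StronglyAdmissible D v) (hg : IsGrounded D g) : ILE v g := by
  intro a
  by_cases ha : v a = TV.u
  · exact Or.inl ha
  · exact Or.inr ((stronglyAdmissible_iff.1 hv a ha).eq_of_fixed hg.1).symm

/-- The pointwise meet of two interpretations. -/
def meetI (v w : A → TV) : A → TV := fun a => if v a = w a then v a else TV.u

theorem meetI_ile_left (v w : A → TV) : ILE (meetI v w) v := by
  intro a
  unfold meetI TV.ile
  split_ifs <;> simp

theorem meetI_ile_right (v w : A → TV) : ILE (meetI v w) w := by
  intro a
  unfold meetI TV.ile
  split_ifs with h <;> simp [h]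

theorem ile_meetI {t v w : A → TV} (hv : ILE t v) (hw : ILE t w) : ILE t (meetI v w) := by
  intro a
  by_cases ha : t a = TV.u
  · exact Or.inl ha
  · exact Or.inr (by simp [meetI, (hv a).eq_of_ne ha, (hw a).eq_of_ne ha])

theorem ILE.trans' {u v w : A → TV} (h : ILE u v) (h' : ILE v w) : ILE u w := by
  intro a
  rcases h a with h | h
  · exact Or.inl h
  · rw [h]
    exact h' a

theorem ile_joinI_left (v w : A → TV) : ILE v (joinI v w) := by
  intro a
  by_cases ha : v a = TV.u
  · exact Or.inl ha
  · exact Or.inr (by simp [joinI, ha])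

/-- Although `joinI` favours its first argument, it is an upper bound of the second one as soon
as the two have a common upper bound. -/
theorem ile_joinI_right {v w g : A → TV} (hv : ILE v g) (hw : ILE w g) : ILE w (joinI v w) := by
  intro a
  by_cases ha : v a = TV.u
  · exact Or.inr (by simp [joinI, ha])
  · have hj : joinI v w a = g a := by simp [joinI, ha, (hv a).eq_of_ne ha]
    rw [hj]
    exact hw a

theorem joinI_ile {v w t : A → TV} (hv : ILE v t) (hw : ILE w t) : ILE (joinI v w) t := by
  intro a
  unfold joinI
  split_ifs
  · exact hw a
  · exact hv a

theorem StronglyAdmissible.joinI [Finite A] [DecidableEq A] {D : ADF A} {v w g : A → TV}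
    (hv : StronglyAdmissible D v) (hw : StronglyAdmissible D w) (hvg : ILE v g) (hwg : ILE w g) :
    StronglyAdmissible D (joinI v w) := by
  refine stronglyAdmissible_iff.2 fun a ha => ?_
  by_cases hva : v a = TV.u
  · have hwa : w a ≠ TV.u := by simpa [_root_.joinI, hva] using ha
    exact (stronglyAdmissible_iff.1 hw a hwa).mono fun b _ => ile_joinI_right hvg hwg b
  · exact (stronglyAdmissible_iff.1 hv a hva).mono fun b _ => ile_joinI_left v w b

end StrongAdmissibility

/-- The strongly admissible interpretations of an ADF form a lattice
under ≤_i, with least element the trivial interpretation and greatest element the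
grounded interpretation. -/
theorem strongly_admissible_lattice {A : Type*} [Fintype A] [DecidableEq A]
    (D : ADF A) (g : A → TV) (hg : IsGrounded D g) :
    (∀ v w : A → TV, StronglyAdmissible D v → StronglyAdmissible D w →
      ∃ s : A → TV, StronglyAdmissible D s ∧ ILE v s ∧ ILE w s ∧
        ∀ t : A → TV, StronglyAdmissible D t → ILE v t → ILE w t → ILE s t) ∧
    (∀ v w : A → TV, StronglyAdmissible D v → StronglyAdmissible D w →
      ∃ m : A → TV, StronglyAdmissible D m ∧ ILE m v ∧ ILE m w ∧
        ∀ t : A → TV, StronglyAdmissible D t → ILE t v → ILE t w → ILE t m) ∧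
    StronglyAdmissible D (trivialInterp A) ∧
    (∀ v : A → TV, StronglyAdmissible D v → ILE (trivialInterp A) v) ∧
    StronglyAdmissible D g ∧
    (∀ v : A → TV, StronglyAdmissible D v → ILE v g) := by
  refine ⟨fun v w hv hw => ?_, fun v w hv hw => ?_, ?_, ?_, hg.stronglyAdmissible,
    fun v hv => hv.ile_grounded hg⟩
  · have hvg := hv.ile_grounded hg
    have hwg := hw.ile_grounded hg
    exact ⟨joinI v w, hv.joinI hw hvg hwg, ile_joinI_left v w, ile_joinI_right hvg hwg,
      fun t _ h1 h2 => joinI_ile h1 h2⟩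
  · have hc := core_ile D (meetI v w)
    exact ⟨core D (meetI v w), core_stronglyAdmissible D _, hc.trans' (meetI_ile_left v w),
      hc.trans' (meetI_ile_right v w), fun t ht h1 h2 => ile_core ht (ile_meetI h1 h2)⟩
  · exact fun a ha => absurd rfl ha
  · exact fun v _ a => Or.inl rfl
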